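/- arXiv:math/0101093 — 2 statements merged into one kernel-verified Lean document; each statement's English description precedes it below -/
import Mathlib

section
/- Let D_0, ..., D_d be the adjacency matrices of an association scheme with d classes on X, with intersection numbers p_{ij}^k. Then the set of common zeros in ℂ^{d+1} of the structure ideal I of the scheme is finite and has exactly d + 1 elements. -/
/-!
The adjacency matrices `D i` span a subalgebra `A` of `Matrix X X ℂ` (the Bose–Mesner algebra). It
is commutative because the intersection numbers are symmetric in the lower indices, and the `D i`
form a basis because they are nonzero `0/1`-matrices with pairwise disjoint supports. A common zero
of the structure ideal is exactly a tuple `z` with `z 0 = 1` which multiplies like the `D i`, so the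
common zeros correspond to the algebra homomorphisms `A → ℂ` (`charEquiv`).

The `D i` are real and symmetric, so `A` is closed under conjugate transposition. Being commutative,
`A` therefore consists of normal matrices, so it has no nonzero nilpotents
(`matrix_eq_zero_of_normal_of_sq`), and being finite-dimensional over the algebraically closed field
`ℂ` it is a product of `dim A = d + 1` copies of `ℂ`. Such an algebra has exactly `d + 1`
homomorphisms to `ℂ` (`card_algHom_complex`).
-/

/-- A finite-dimensional reduced commutative `ℂ`-algebra is a product of copies of `ℂ`, so its
characters are as many as its dimension. -/
lemma card_algHom_complex (A : Type*) [CommRing A] [Algebra ℂ A] [Module.Finite ℂ A]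
    [IsReduced A] :
    Finite (A →ₐ[ℂ] ℂ) ∧ Nat.card (A →ₐ[ℂ] ℂ) = Module.finrank ℂ A := by
  have : IsArtinianRing A := .of_finite ℂ A
  let _ (m : MaximalSpectrum A) : Field (A ⧸ m.asIdeal) := Ideal.Quotient.field m.asIdeal
  have (m : MaximalSpectrum A) : Algebra.FormallyEtale ℂ (A ⧸ m.asIdeal) :=
    Algebra.FormallyEtale.of_isSeparable ℂ (A ⧸ m.asIdeal)
  have : Algebra.FormallyEtale ℂ A :=
    .of_equiv ((IsArtinianRing.equivPi A).restrictScalars ℂ).symm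
  have e := Algebra.IsFiniteSplit.algHomEquivPrimeSpectrum ℂ A
  have : Finite (PrimeSpectrum A) := inferInstance
  cases nonempty_fintype (PrimeSpectrum A)
  refine ⟨Finite.of_equiv _ e.symm, ?_⟩
  rw [Nat.card_congr e,
    (Algebra.FormallyEtale.equivPiOfIsSepClosed ℂ A).toLinearEquiv.finrank_eq,
    Module.finrank_fintype_fun_eq_card, Nat.card_eq_fintype_card]

/-- The tuples `z` with `z 0 = 1` satisfying the multiplication rule with structure
constants `p`. -/
def charTuples {d : ℕ} (p : Fin (d + 1) → Fin (d + 1) → Fin (d + 1) → ℕ) :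
    Set (Fin (d + 1) → ℂ) :=
  {z | z 0 = 1 ∧ ∀ i j, z i * z j = ∑ k, (p i j k : ℂ) * z k}

/-- A character of an algebra with a multiplicative basis is determined by its values on the basis,
which can be any tuple obeying the multiplication rule of that basis. -/
noncomputable def charEquiv {A : Type*} [CommRing A] [Algebra ℂ A] {d : ℕ}
    (p : Fin (d + 1) → Fin (d + 1) → Fin (d + 1) → ℕ) (b : Module.Basis (Fin (d + 1)) ℂ A)
    (b0 : b 0 = 1) (bmul : ∀ i j, b i * b j = ∑ k, (p i j k : ℂ) • b k) :
    (A →ₐ[ℂ] ℂ) ≃ charTuples p where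
  toFun φ := ⟨fun i ↦ φ (b i), by simp [b0], fun i j ↦ by
    rw [← map_mul, bmul, map_sum]
    simp⟩
  invFun z := AlgHom.ofLinearMap (b.constr ℂ z.1) (by rw [← b0, b.constr_basis, z.2.1]) <| by
    have h : (LinearMap.mul ℂ A).compr₂ (b.constr ℂ z.1) =
        (LinearMap.mul ℂ ℂ).compl₁₂ (b.constr ℂ z.1) (b.constr ℂ z.1) := by
      refine b.ext fun i ↦ b.ext fun j ↦ ?_
      simp [bmul, z.2.2 i j]
    exact fun x y ↦ congr($h x y)
  left_inv φ := by
    apply AlgHom.toLinearMap_injective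
    refine b.ext fun i ↦ ?_
    simp
  right_inv z := by
    ext i
    simp

lemma zeroSet_eq_charTuples {d : ℕ}
    (p : Fin (d + 1) → Fin (d + 1) → Fin (d + 1) → ℕ)
    (hpsym : ∀ i j k, p i j k = p j i k) :
    {z : Fin (d + 1) → ℂ | ∀ g ∈ Ideal.span
      ({MvPolynomial.X 0 - 1} ∪
       {f : MvPolynomial (Fin (d + 1)) ℂ | ∃ i j : Fin (d + 1), i ≤ j ∧
          f = MvPolynomial.X i * MvPolynomial.X j -
            ∑ k, (p i j k : ℂ) • MvPolynomial.X k}), MvPolynomial.eval z g = 0} =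
      charTuples p := by
  ext z
  constructor
  · intro h
    have key : ∀ i j, i ≤ j → z i * z j = ∑ k, (p i j k : ℂ) * z k := by
      intro i j hij
      have := h _ (Ideal.subset_span (Or.inr ⟨i, j, hij, rfl⟩))
      simpa [sub_eq_zero, MvPolynomial.smul_eval] using this
    refine ⟨?_, fun i j ↦ ?_⟩
    · have := h _ (Ideal.subset_span (Or.inl rfl))
      simpa [sub_eq_zero] using this
    · rcases le_total i j with hij | hij
      · exact key i j hij
      · rw [mul_comm, key j i hij]
        simp only [hpsym]
  · rintro ⟨h0, hmul⟩
    change ∀ g ∈ Ideal.span _, g ∈ RingHom.ker (MvPolynomial.eval z)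
    refine Ideal.span_le.2 ?_
    rintro f (rfl | ⟨i, j, -, rfl⟩)
    · simp [RingHom.mem_ker, h0]
    · simp [RingHom.mem_ker, hmul, MvPolynomial.smul_eval]

/-- At each position exactly one `D i` is nonzero, and there it equals `1`; evaluating a vanishing
combination at a position in the support of `D i` isolates the `i`-th coefficient. -/
lemma linearIndependent_of_sum_eq_one {X ι : Type*} [Fintype ι]
    (D : ι → Matrix X X ℂ)
    (h01 : ∀ i x y, D i x y = 0 ∨ D i x y = 1) (hDne : ∀ i, D i ≠ 0)
    (hDsum : (∑ i, D i) = Matrix.of (fun _ _ => (1 : ℂ))) :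
    LinearIndependent ℂ D := by
  classical
  rw [Fintype.linearIndependent_iff]
  intro c hc i
  obtain ⟨x, y, hxy⟩ : ∃ x y, D i x y ≠ 0 := by
    by_contra! h
    exact hDne i (Matrix.ext h)
  have hi : D i x y = 1 := (h01 i x y).resolve_left hxy
  have hs : ∑ j, D j x y = 1 := by
    simpa [Matrix.sum_apply] using congr($hDsum x y)
  have hz : ∀ j, j ≠ i → D j x y = 0 := by
    -- The entries at `(x, y)` are `n j : ℕ` with sum `1`, and `n i = 1` uses up the whole sum.
    have hn : ∀ j, ∃ n : ℕ, D j x y = n := fun j ↦ by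
      rcases h01 j x y with h | h
      · exact ⟨0, by simp [h]⟩
      · exact ⟨1, by simp [h]⟩
    choose n hn using hn
    simp only [hn] at hs hi ⊢
    norm_cast at hs hi ⊢
    rw [← Finset.add_sum_erase _ _ (Finset.mem_univ i), hi] at hs
    intro j hj
    exact (Finset.sum_eq_zero_iff.1 (by omega : ∑ j ∈ Finset.univ.erase i, n j = 0)) j
      (by simp [hj])
  have := congr($hc x y)
  rw [Matrix.sum_apply, Finset.sum_eq_single i (by simp +contextual [hz]) (by simp)] at this
  simpa [hi] using this

open scoped ComplexOrder in
/-- A normal matrix with square zero vanishes. -/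
lemma matrix_eq_zero_of_normal_of_sq {X : Type*} [Fintype X] (M : Matrix X X ℂ)
    (hM : Commute M M.conjTranspose) (h : M * M = 0) : M = 0 := by
  have h1 : (M * M.conjTranspose) * (M * M.conjTranspose).conjTranspose = 0 := by
    rw [Matrix.conjTranspose_mul, Matrix.conjTranspose_conjTranspose]
    calc M * M.conjTranspose * (M * M.conjTranspose)
        = M.conjTranspose * M * (M * M.conjTranspose) := by rw [hM.eq]
      _ = M.conjTranspose * (M * M) * M.conjTranspose := by simp only [mul_assoc]
      _ = 0 := by rw [h, mul_zero, zero_mul]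
  exact Matrix.self_mul_conjTranspose_eq_zero.1 (Matrix.self_mul_conjTranspose_eq_zero.1 h1)


/-- The set of common zeros of the structure ideal of an association scheme with
`d` classes is finite, with exactly `d + 1` elements. -/
theorem assocScheme_structureIdeal_zeroSet_card
    {X : Type*} [Fintype X] [Nonempty X] [DecidableEq X]
    {d : ℕ} (hd : 1 ≤ d)
    (D : Fin (d + 1) → Matrix X X ℂ)
    (p : Fin (d + 1) → Fin (d + 1) → Fin (d + 1) → ℕ)
    (h01 : ∀ i x y, D i x y = 0 ∨ D i x y = 1)
    (hDne : ∀ i, D i ≠ 0)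
    (hD0 : D 0 = 1)
    (hDsum : (∑ i, D i) = Matrix.of (fun _ _ => (1 : ℂ)))
    (hDsym : ∀ i, (D i).IsSymm)
    (hpsym : ∀ i j k, p i j k = p j i k)
    (hDmul : ∀ i j, D i * D j = ∑ k, (p i j k : ℂ) • D k)
    (I : Ideal (MvPolynomial (Fin (d + 1)) ℂ))
    (hI : I = Ideal.span
      ({MvPolynomial.X 0 - 1} ∪
       {f : MvPolynomial (Fin (d + 1)) ℂ | ∃ i j : Fin (d + 1), i ≤ j ∧
          f = MvPolynomial.X i * MvPolynomial.X j -
            ∑ k, (p i j k : ℂ) • MvPolynomial.X k})) :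
    ({z : Fin (d + 1) → ℂ | ∀ g ∈ I, MvPolynomial.eval z g = 0}).Finite ∧
    ({z : Fin (d + 1) → ℂ | ∀ g ∈ I, MvPolynomial.eval z g = 0}).ncard = d + 1 := by
  subst hI
  rw [zeroSet_eq_charTuples p hpsym]
  have hcommD : ∀ i j, D i * D j = D j * D i := fun i j ↦ by
    rw [hDmul, hDmul]
    simp only [hpsym i j]
  let S := Submodule.span ℂ (Set.range D)
  have hDS : ∀ i, D i ∈ S := fun i ↦ Submodule.subset_span ⟨i, rfl⟩
  have hmulS : ∀ x y, x ∈ S → y ∈ S → x * y ∈ S := by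
    intro x y hx hy
    induction hx, hy using Submodule.span_induction₂ with
    | mem_mem x y hx hy =>
      obtain ⟨i, rfl⟩ := hx
      obtain ⟨j, rfl⟩ := hy
      rw [hDmul]
      exact S.sum_mem fun k _ ↦ S.smul_mem _ (hDS k)
    | zero_left y hy => simp
    | zero_right x hx => simp
    | add_left x y z _ _ _ h1 h2 => rw [add_mul]; exact S.add_mem h1 h2
    | add_right x y z _ _ _ h1 h2 => rw [mul_add]; exact S.add_mem h1 h2
    | smul_left r x y _ _ h => rw [smul_mul_assoc]; exact S.smul_mem _ h
    | smul_right r x y _ _ h => rw [mul_smul_comm]; exact S.smul_mem _ h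
  have hcommS : ∀ x y, x ∈ S → y ∈ S → x * y = y * x := by
    intro x y hx hy
    induction hx, hy using Submodule.span_induction₂ with
    | mem_mem x y hx hy =>
      obtain ⟨i, rfl⟩ := hx
      obtain ⟨j, rfl⟩ := hy
      exact hcommD i j
    | zero_left y hy => simp
    | zero_right x hx => simp
    | add_left x y z _ _ _ h1 h2 => rw [add_mul, mul_add, h1, h2]
    | add_right x y z _ _ _ h1 h2 => rw [add_mul, mul_add, h1, h2]
    | smul_left r x y _ _ h => rw [smul_mul_assoc, mul_smul_comm, h]
    | smul_right r x y _ _ h => rw [smul_mul_assoc, mul_smul_comm, h]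
  have hDstar : ∀ i, (D i).conjTranspose = D i := fun i ↦ by
    ext x y
    rw [Matrix.conjTranspose_apply, (hDsym i).apply x y]
    rcases h01 i x y with h | h <;> simp [h]
  have hstarS : ∀ x ∈ S, x.conjTranspose ∈ S := by
    intro x hx
    induction hx using Submodule.span_induction with
    | mem x hx =>
      obtain ⟨i, rfl⟩ := hx
      rw [hDstar]
      exact hDS i
    | zero => simp
    | add x y _ _ h1 h2 => rw [Matrix.conjTranspose_add]; exact S.add_mem h1 h2
    | smul r x _ h => rw [Matrix.conjTranspose_smul]; exact S.smul_mem _ h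
  let A : Subalgebra ℂ (Matrix X X ℂ) := S.toSubalgebra (hD0 ▸ hDS 0) hmulS
  let _ : CommRing A :=
    { (inferInstance : Ring A) with
      mul_comm := fun x y ↦ Subtype.ext (hcommS x y x.2 y.2) }
  let b : Module.Basis (Fin (d + 1)) ℂ A :=
    Module.Basis.span (linearIndependent_of_sum_eq_one D h01 hDne hDsum)
  have hb : ∀ i, ((b i : A) : Matrix X X ℂ) = D i := fun i ↦
    congrArg Subtype.val
      (Module.Basis.span_apply (linearIndependent_of_sum_eq_one D h01 hDne hDsum) i)
  have : Module.Finite ℂ A := Module.Finite.of_basis b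
  have : IsReduced A := by
    rw [isReduced_iff_pow_one_lt 2 one_lt_two]
    intro x hx
    apply Subtype.ext
    refine matrix_eq_zero_of_normal_of_sq x.1 (hcommS _ _ x.2 (hstarS _ x.2)) ?_
    rw [pow_two] at hx
    exact congrArg Subtype.val hx
  have e : (A →ₐ[ℂ] ℂ) ≃ charTuples p := charEquiv p b
    (Subtype.ext ((hb 0).trans hD0))
    (fun i j ↦ Subtype.ext <| by
      change ((b i : A) : Matrix X X ℂ) * ((b j : A) : Matrix X X ℂ) = _
      rw [hb, hb, hDmul, AddSubmonoidClass.coe_finsetSum]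
      simp only [Subalgebra.coe_smul, hb])
  obtain ⟨hfin, hcard⟩ := card_algHom_complex A
  refine ⟨Set.finite_coe_iff.1 (Finite.of_equiv _ e), ?_⟩
  rw [← Nat.card_coe_set_eq, ← Nat.card_congr e, hcard, Module.finrank_eq_card_basis b,
    Fintype.card_fin]
end

section
/- Let D_0, ..., D_d be the adjacency matrices of an association scheme with d classes on X, with intersection numbers p_{ij}^k and structure ideal I, and let c_0, ..., c_d ∈ ℂ. Set A = Σ_{i=0}^d c_i · D_i. Then the ℂ-subalgebra of Matrix X X ℂ generated by A contains every D_i (i.e. A generates the whole Bose–Mesner algebra) if and only if the linear form z ↦ Σ_{i=0}^d c_i · z_i is injective on the set of common zeros of I in ℂ^{d+1} (i.e. I is in generic position with respect to A). -/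
/-!
Write `Z` for the set of common zeros of `I`. A point of `Z` is a vector `z` with `z 0 = 1` that
multiplies according to the intersection numbers, i.e. a character `D i ↦ z i` of the Bose–Mesner
algebra.

If `A = ∑ i, c i • D i` generates the algebra, every `D i` is a polynomial in `A`, so `z i` is the
same polynomial evaluated at `∑ i, c i * z i`; hence that number determines `z ∈ Z`. Here the
linear independence of the `D i` (`linearIndependent_of_zero_one`) lets one compare coefficients,
and `exists_coeff_of_mem_adjoin` does the evaluation.

Conversely, the `D i` are commuting Hermitian matrices, so the whole space is spanned by their
joint eigenvectors. The eigenvalue vector `z` of a joint eigenvector lies in `Z`, and there are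
finitely many such `z`. If the linear form separates them, Lagrange interpolation gives a
polynomial `q` with `q (∑ j, c j * z j) = z i` for all of them, so `q(A)` and `D i` agree on a
spanning set and are equal.
-/

open Polynomial in
/-- Every element of the algebra generated by `∑ j, c j • D j` is a combination `∑ i, a i • D i`
whose image under each character `D i ↦ z i` is a polynomial function, the same for all
characters, of `∑ j, c j * z j`. -/
lemma exists_coeff_of_mem_adjoin {X : Type*} [Fintype X] [DecidableEq X] {d : ℕ}
    {D : Fin (d + 1) → Matrix X X ℂ} {p : Fin (d + 1) → Fin (d + 1) → Fin (d + 1) → ℕ}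
    (hD0 : D 0 = 1) (hDmul : ∀ i j, D i * D j = ∑ k, (p i j k : ℂ) • D k)
    (c : Fin (d + 1) → ℂ) {M : Matrix X X ℂ}
    (hM : M ∈ Algebra.adjoin ℂ {∑ j, c j • D j}) :
    ∃ (a : Fin (d + 1) → ℂ) (q : ℂ[X]), M = ∑ i, a i • D i ∧
      ∀ z : Fin (d + 1) → ℂ, z 0 = 1 → (∀ i j, z i * z j = ∑ k, (p i j k : ℂ) * z k) →
        ∑ i, a i * z i = q.eval (∑ i, c i * z i) := by
  induction hM using Algebra.adjoin_induction with
  | mem x hx =>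
    rw [Set.mem_singleton_iff] at hx
    exact ⟨c, Polynomial.X, hx, fun z _ _ => by simp⟩
  | algebraMap r =>
    refine ⟨Pi.single 0 r, Polynomial.C r, ?_, fun z hz _ => ?_⟩
    · simp [Pi.single_apply, hD0, Algebra.algebraMap_eq_smul_one]
    · simp [Pi.single_apply, hz]
  | add x y _ _ hx hy =>
    obtain ⟨a, q, rfl, ha⟩ := hx
    obtain ⟨b, r, rfl, hb⟩ := hy
    refine ⟨a + b, q + r, ?_, fun z h0 hz => ?_⟩
    · simp [add_smul, Finset.sum_add_distrib]
    · simp [add_mul, Finset.sum_add_distrib, ha z h0 hz, hb z h0 hz]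
  | mul x y _ _ hx hy =>
    obtain ⟨a, q, rfl, ha⟩ := hx
    obtain ⟨b, r, rfl, hb⟩ := hy
    refine ⟨fun k => ∑ i, ∑ j, a i * b j * p i j k, q * r, ?_, fun z h0 hz => ?_⟩
    · simp only [Finset.sum_mul_sum, smul_mul_smul_comm, hDmul, Finset.sum_smul,
        Finset.smul_sum, smul_smul]
      conv_rhs => rw [Finset.sum_comm]
      refine Finset.sum_congr rfl fun i _ => ?_
      rw [Finset.sum_comm]
    · rw [Polynomial.eval_mul, ← ha z h0 hz, ← hb z h0 hz]
      have hz' : ∀ i j, a i * z i * (b j * z j) = ∑ k, a i * b j * p i j k * z k := by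
        intro i j
        rw [mul_mul_mul_comm, hz, Finset.mul_sum]
        simp_rw [mul_assoc]
      rw [Finset.sum_mul_sum]
      simp only [hz', Finset.sum_mul]
      rw [Finset.sum_comm]
      refine Finset.sum_congr rfl fun i _ => ?_
      rw [Finset.sum_comm]

/-- Nonzero `0`-`1` matrices that sum to the all-ones matrix have disjoint supports, so they are
linearly independent. -/
lemma linearIndependent_of_zero_one {X : Type*} {ι : Type*} [Fintype ι]
    {D : ι → Matrix X X ℂ} (h01 : ∀ i x y, D i x y = 0 ∨ D i x y = 1)
    (hDne : ∀ i, D i ≠ 0) (hDsum : (∑ i, D i) = Matrix.of (fun _ _ => (1 : ℂ))) :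
    LinearIndependent ℂ D := by
  classical
  rw [Fintype.linearIndependent_iff]
  intro g hg i
  obtain ⟨x, y, hxy⟩ : ∃ x y, D i x y ≠ 0 := by
    by_contra! h
    exact hDne i (by ext x y; simp [h])
  have h1 : D i x y = 1 := (h01 i x y).resolve_left hxy
  have hcard : (Finset.univ.filter fun j => D j x y = 1).card = 1 := by
    have h2 : ∑ j, D j x y = 1 := by
      simpa [Matrix.sum_apply] using congrFun (congrFun hDsum x) y
    have h3 : ∀ j, D j x y = if D j x y = 1 then 1 else 0 := by
      intro j
      rcases h01 j x y with h | h <;> simp [h]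
    rw [Finset.sum_congr rfl fun j _ => h3 j, Finset.sum_boole] at h2
    exact_mod_cast h2
  have h0 : ∀ j, j ≠ i → D j x y = 0 := by
    intro j hj
    refine (h01 j x y).resolve_right fun h => hj ?_
    exact Finset.card_le_one.mp hcard.le j (by simp [h]) i (by simp [h1])
  have h4 := congrFun (congrFun hg x) y
  rw [Matrix.sum_apply, Finset.sum_eq_single i (fun j _ hj => by simp [h0 j hj]) (by simp)] at h4
  simpa [h1] using h4

/-- The generators of the structure ideal are indexed by `i ≤ j` only; symmetry of the intersection
numbers extends the relation at a common zero to all `i`, `j`. -/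
lemma mem_zeros_structureIdeal_iff {d : ℕ} {p : Fin (d + 1) → Fin (d + 1) → Fin (d + 1) → ℕ}
    (hpsym : ∀ i j k, p i j k = p j i k) (z : Fin (d + 1) → ℂ) :
    (∀ g ∈ Ideal.span
      ({MvPolynomial.X 0 - 1} ∪
       {f : MvPolynomial (Fin (d + 1)) ℂ | ∃ i j : Fin (d + 1), i ≤ j ∧
          f = MvPolynomial.X i * MvPolynomial.X j -
            ∑ k, (p i j k : ℂ) • MvPolynomial.X k}), MvPolynomial.eval z g = 0) ↔
      z 0 = 1 ∧ ∀ i j, z i * z j = ∑ k, (p i j k : ℂ) * z k := by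
  constructor
  · intro h
    have hle : ∀ i j, i ≤ j → z i * z j = ∑ k, (p i j k : ℂ) * z k := by
      intro i j hij
      have := h _ (Ideal.subset_span (Or.inr ⟨i, j, hij, rfl⟩))
      simpa [sub_eq_zero, MvPolynomial.smul_eval] using this
    refine ⟨?_, fun i j => ?_⟩
    · have := h _ (Ideal.subset_span (Or.inl rfl))
      simpa [sub_eq_zero] using this
    · rcases le_total i j with hij | hij
      · exact hle i j hij
      · rw [mul_comm, hle j i hij]
        simp_rw [hpsym j i]
  · rintro ⟨h0, hz⟩ g hg
    refine (Ideal.span_le (I := RingHom.ker (MvPolynomial.eval z))).mpr ?_ hg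
    rintro f (rfl | ⟨i, j, -, rfl⟩)
    · simp [RingHom.mem_ker, h0]
    · simp [RingHom.mem_ker, MvPolynomial.smul_eval, hz]

/-- If the joint eigenvectors of the operators `T i` span the space and the linear form with
coefficients `c` separates the joint eigenvalue vectors, then each `T i` is a polynomial in
`∑ j, c j • T j`, obtained by Lagrange interpolation on the finite set of joint eigenvalue
vectors. -/
lemma exists_aeval_eq_of_injOn {V ι : Type*} [AddCommGroup V] [Module ℂ V]
    [FiniteDimensional ℂ V] [Fintype ι] (T : ι → Module.End ℂ V)
    (htop : ⨆ χ : ι → ℂ, ⨅ i, Module.End.eigenspace (T i) (χ i) = ⊤) (c : ι → ℂ)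
    (hinj : Set.InjOn (fun z : ι → ℂ => ∑ i, c i * z i)
      {z | ∃ v : V, v ≠ 0 ∧ ∀ i, T i v = z i • v}) (i : ι) :
    ∃ q : Polynomial ℂ, Polynomial.aeval (∑ j, c j • T j) q = T i := by
  classical
  set S : Set (ι → ℂ) := {z | ∃ v : V, v ≠ 0 ∧ ∀ i, T i v = z i • v} with hS
  have hfin : S.Finite := by
    refine (Set.Finite.pi' fun i => (T i).finite_hasEigenvalue).subset ?_
    rintro z ⟨v, hv, hz⟩ i
    exact Module.End.hasEigenvalue_of_hasEigenvector
      ⟨Module.End.mem_eigenspace_iff.mpr (hz i), hv⟩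
  let q := Lagrange.interpolate hfin.toFinset (fun z : ι → ℂ => ∑ i, c i * z i) (fun z => z i)
  refine ⟨q, ?_⟩
  rw [← LinearMap.eqLocus_eq_top, eq_top_iff, ← htop, iSup_le_iff]
  intro z v hv
  rw [Submodule.mem_iInf] at hv
  have hv' : ∀ i, T i v = z i • v := fun i => Module.End.mem_eigenspace_iff.mp (hv i)
  rcases eq_or_ne v 0 with rfl | hne
  · simp
  have hA : (∑ j, c j • T j) v = (∑ j, c j * z j) • v := by
    simp [LinearMap.sum_apply, hv', Finset.sum_smul, smul_smul]
  have hq : q.eval (∑ j, c j * z j) = z i :=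
    Lagrange.eval_interpolate_at_node (v := fun z : ι → ℂ => ∑ i, c i * z i)
      (fun z : ι → ℂ => z i) (by simpa using hinj)
      (hfin.mem_toFinset.mpr ⟨v, hne, hv'⟩)
  rw [LinearMap.mem_eqLocus, Module.End.aeval_apply_of_mem_apply_eq_smul hA, hq, hv']


/-- `A = ∑ i, c i • D i` generates the whole Bose–Mesner algebra iff the linear form
`z ↦ ∑ i, c i * z i` is injective on the set of common zeros of the structure ideal
(i.e. iff `I` is in generic position with respect to `A`). -/
theorem assocScheme_generates_iff_generic_position
    {X : Type*} [Fintype X] [Nonempty X] [DecidableEq X]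
    {d : ℕ} (hd : 1 ≤ d)
    (D : Fin (d + 1) → Matrix X X ℂ)
    (p : Fin (d + 1) → Fin (d + 1) → Fin (d + 1) → ℕ)
    (h01 : ∀ i x y, D i x y = 0 ∨ D i x y = 1)
    (hDne : ∀ i, D i ≠ 0)
    (hD0 : D 0 = 1)
    (hDsum : (∑ i, D i) = Matrix.of (fun _ _ => (1 : ℂ)))
    (hDsym : ∀ i, (D i).IsSymm)
    (hpsym : ∀ i j k, p i j k = p j i k)
    (hDmul : ∀ i j, D i * D j = ∑ k, (p i j k : ℂ) • D k)
    (I : Ideal (MvPolynomial (Fin (d + 1)) ℂ))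
    (hI : I = Ideal.span
      ({MvPolynomial.X 0 - 1} ∪
       {f : MvPolynomial (Fin (d + 1)) ℂ | ∃ i j : Fin (d + 1), i ≤ j ∧
          f = MvPolynomial.X i * MvPolynomial.X j -
            ∑ k, (p i j k : ℂ) • MvPolynomial.X k}))
    (c : Fin (d + 1) → ℂ) :
    (∀ i, D i ∈ Algebra.adjoin ℂ {∑ j, c j • D j}) ↔
      Set.InjOn (fun z : Fin (d + 1) → ℂ => ∑ i, c i * z i)
        {z : Fin (d + 1) → ℂ | ∀ g ∈ I, MvPolynomial.eval z g = 0} := by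
  subst hI
  simp_rw [mem_zeros_structureIdeal_iff hpsym]
  constructor
  · rintro hgen z ⟨hz0, hz⟩ w ⟨hw0, hw⟩ hzw
    funext i
    obtain ⟨a, q, ha, hq⟩ := exists_coeff_of_mem_adjoin hD0 hDmul c (hgen i)
    have hai : a = Pi.single i 1 := by
      have hli := linearIndependent_of_zero_one h01 hDne hDsum
      rw [Fintype.linearIndependent_iffₛ] at hli
      refine funext (hli a (Pi.single i 1) ?_)
      simp [← ha, Pi.single_apply]
    have h1 := hq z hz0 hz
    have h2 := hq w hw0 hw
    simp only at hzw
    rw [hzw, ← h2] at h1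
    simpa [hai, Pi.single_apply] using h1
  · intro hinj i
    let e := Matrix.toLpLinAlgEquiv (R := ℂ) (n := X) 2
    have hsymm : ∀ i, (e (D i)).IsSymmetric := by
      intro i
      refine Matrix.isSymmetric_toEuclideanLin_iff.mpr ?_
      ext x y
      rw [Matrix.conjTranspose_apply, (hDsym i).apply]
      rcases h01 i x y with h | h <;> simp [h]
    have hcomm : ∀ i j, Commute (e (D i)) (e (D j)) := by
      intro i j
      refine Commute.map (f := e) ?_
      rw [Commute, SemiconjBy, hDmul, hDmul]
      simp_rw [hpsym i j]
    have hsub : {z : Fin (d + 1) → ℂ | ∃ v, v ≠ 0 ∧ ∀ i, e (D i) v = z i • v} ⊆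
        {z | z 0 = 1 ∧ ∀ i j, z i * z j = ∑ k, (p i j k : ℂ) * z k} := by
      rintro z ⟨v, hv, hz⟩
      refine ⟨smul_left_injective ℂ hv ?_, fun i j => smul_left_injective ℂ hv ?_⟩
      · have := hz 0
        simp only [hD0, map_one, Module.End.one_apply] at this
        simp [← this]
      · have h1 : e (D i * D j) v = (z i * z j) • v := by
          rw [map_mul, Module.End.mul_apply, hz, map_smul, hz, smul_smul, mul_comm]
        have h2 : e (D i * D j) v = (∑ k, (p i j k : ℂ) * z k) • v := by
          simp [hDmul, hz, Finset.sum_smul, smul_smul]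
        exact h1.symm.trans h2
    obtain ⟨q, hq⟩ := exists_aeval_eq_of_injOn (fun i => e (D i))
      (LinearMap.IsSymmetric.iSup_iInf_eq_top_of_commute hsymm fun i j _ => hcomm i j) c
      (hinj.mono hsub) i
    have hqA : Polynomial.aeval (∑ j, c j • D j) q = D i := by
      apply e.injective
      rw [← hq, ← Polynomial.aeval_algHom_apply]
      simp
    rw [← hqA]
    exact Polynomial.aeval_mem_adjoin_singleton _ _
end
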